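/- Let r ≥ 1, q ≥ 2, and let m_1,…,m_q be square-free monomials forming a minimal generating set. Let i ∈ {1,…,q} and let M ∈ LCM(I^r) with M ≠ m_i^r. If there exists a ∈ G^r_i such that m^a divides M, then there exists a′ ∈ G^r_i ∩ F^r_i such that m^{a′} divides M. -/

import Mathlib

/-!
STATEMENT 10: Let r ≥ 1, q ≥ 2, and let m_1,…,m_q be square-free monomials forming a
minimal generating set. Let i ∈ [q] and M ∈ LCM(I^r) with M ≠ m_i^r. If there exists
a ∈ G^r_i with m^a ∣ M, then there exists a′ ∈ G^r_i ∩ F^r_i with m^{a′} ∣ M.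

Monomials are identified with their exponent vectors in ℕ^n; divisibility is the
componentwise order, and the lcm is the componentwise maximum. Here s = ⌈r/2⌉ = (r+1)/2.
-/

open Finset

/-- The exponent vector of `m^a = m_1^{a_1} ⋯ m_q^{a_q}`. -/
def mpow {n q : ℕ} (m : Fin q → Fin n → ℕ) (a : Fin q → ℕ) : Fin n → ℕ :=
  fun k => ∑ j, a j * m j k

/-- `LCM(I^r)`: the monomials arising as least common multiples of nonempty subsets of
`{m^a : a ∈ N^r_q}`. -/
def lcmLattice {n q : ℕ} (m : Fin q → Fin n → ℕ) (r : ℕ) : Set (Fin n → ℕ) :=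
  {M | ∃ T : Finset (Fin q → ℕ), T.Nonempty ∧ (∀ a ∈ T, ∑ j, a j = r) ∧
    M = fun k => T.sup fun a => mpow m a k}

/-- The set `F^r_i`, with `s = ⌈r/2⌉ = (r+1)/2`. -/
def Fset (r q : ℕ) (i : Fin q) : Set (Fin q → ℕ) :=
  {a | (∑ k, a k = r) ∧ a i ≤ max (r - 1) ((r + 1) / 2) ∧
    ∀ j, j ≠ i → a j ≤ (r + 1) / 2}

/-- The set `G^r_i`. -/
def Gset (r q : ℕ) (i : Fin q) : Set (Fin q → ℕ) :=
  {a | (∑ k, a k = r) ∧ r - 1 ≤ a i}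

theorem mul_le_mpow {n q : ℕ} (m : Fin q → Fin n → ℕ) (a : Fin q → ℕ) (j : Fin q) (k : Fin n) :
    a j * m j k ≤ mpow m a k :=
  single_le_sum (f := fun j => a j * m j k) (fun _ _ => Nat.zero_le _) (mem_univ j)

theorem mpow_add {n q : ℕ} (m : Fin q → Fin n → ℕ) (a b : Fin q → ℕ) :
    mpow m (a + b) = mpow m a + mpow m b := by
  ext k
  simp [mpow, add_mul, sum_add_distrib]

theorem mpow_single {n q : ℕ} (m : Fin q → Fin n → ℕ) (i : Fin q) (c : ℕ) (k : Fin n) :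
    mpow m (Pi.single i c) k = c * m i k := by
  simp [mpow, Pi.single_apply]

theorem add_le_sum_of_ne {q : ℕ} (a : Fin q → ℕ) {i j : Fin q} (hij : i ≠ j) :
    a i + a j ≤ ∑ k, a k := by
  rw [← sum_pair hij]
  exact sum_le_sum_of_subset (subset_univ _)

/-- An element of `LCM(I^r)` other than `m_i^r` is divisible by some `m_j` with `j ≠ i`. -/
theorem exists_ne_le_of_mem_lcmLattice {n q r : ℕ} {m : Fin q → Fin n → ℕ} {i : Fin q}
    {M : Fin n → ℕ} (hM : M ∈ lcmLattice m r) (hne : M ≠ fun k => r * m i k) :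
    ∃ j, j ≠ i ∧ m j ≤ M := by
  obtain ⟨T, hT, hsum, rfl⟩ := hM
  by_contra! h
  refine hne (funext fun k => ?_)
  have key : ∀ b ∈ T, mpow m b k = r * m i k := by
    intro b hb
    have hzero : ∀ j, j ≠ i → b j = 0 := by
      intro j hj
      by_contra hbj
      refine h j hj fun l => ?_
      calc m j l ≤ b j * m j l := Nat.le_mul_of_pos_left _ (Nat.pos_of_ne_zero hbj)
        _ ≤ mpow m b l := mul_le_mpow m b j l
        _ ≤ T.sup fun a => mpow m a l := le_sup (f := fun a => mpow m a l) hb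
    have hbi : b i = r := by
      rw [← hsum b hb]
      exact (Fintype.sum_eq_single i hzero).symm
    have hb_eq : b = Pi.single i r := by
      ext j
      by_cases hj : j = i
      · subst hj; simp [hbi]
      · simp [hj, hzero j hj]
    rw [hb_eq, mpow_single]
  rw [sup_congr rfl key, sup_const hT]

theorem second_layer_meets_first_layer {n q r : ℕ} (hr : 1 ≤ r) (hq : 2 ≤ q)
    (m : Fin q → Fin n → ℕ)
    (hsf : ∀ j k, m j k ≤ 1)
    (hmin : ∀ i j, i ≠ j → ¬ m i ≤ m j)
    (i : Fin q) (M : Fin n → ℕ) (hM : M ∈ lcmLattice m r)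
    (hne : M ≠ fun k => r * m i k)
    (hex : ∃ a ∈ Gset r q i, mpow m a ≤ M) :
    ∃ a' ∈ Gset r q i ∩ Fset r q i, mpow m a' ≤ M := by
  obtain ⟨a, ⟨hsum, hai⟩, haM⟩ := hex
  by_cases hle : a i ≤ max (r - 1) ((r + 1) / 2)
  · refine ⟨a, ⟨⟨hsum, hai⟩, hsum, hle, fun j hj => ?_⟩, haM⟩
    have := add_le_sum_of_ne a hj
    omega
  · have har : r ≤ a i := by omega
    obtain ⟨j, hj, hjM⟩ := exists_ne_le_of_mem_lcmLattice hM hne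
    have hsum' : ∑ k, (Pi.single i (r - 1) + Pi.single j 1 : Fin q → ℕ) k = r := by
      simp [sum_add_distrib, hr]
    refine ⟨Pi.single i (r - 1) + Pi.single j 1,
      ⟨⟨hsum', by simp⟩, hsum', by simp [hj.symm], fun l hl => ?_⟩, fun k => ?_⟩
    · have : (Pi.single j 1 : Fin q → ℕ) l ≤ 1 := by
        rw [Pi.single_apply]
        split_ifs <;> simp
      simp only [Pi.add_apply, Pi.single_eq_of_ne hl, zero_add]
      omega
    · rw [mpow_add, Pi.add_apply, mpow_single, mpow_single, one_mul]
      have hi := hsf i k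
      have hj1 := hsf j k
      have hMi : a i * m i k ≤ M k := (mul_le_mpow m a i k).trans (haM k)
      have hMj : m j k ≤ M k := hjM k
      change (r - 1) * m i k + m j k ≤ M k
      interval_cases m i k <;> omega
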